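/- arXiv:2204.09740 — 4 statements merged into one kernel-verified Lean document; each statement's English description precedes it below -/
import Mathlib

section
/- Let Z ⊂ ℝ^n and W ⊂ ℝ^m be constrained zonotopes with data (G_z, c_z, A_z, b_z) and (G_w, c_w, A_w, b_w) respectively. Then the Cartesian product Z × W = {(z, w) ∈ ℝ^{n+m} : z ∈ Z, w ∈ W} is exactly the constrained zonotope in ℝ^{n+m} with generator matrix the block-diagonal matrix [[G_z, 0],[0, G_w]], center (c_z, c_w), constraint matrix the block-diagonal matrix [[A_z, 0],[0, A_w]], and constraint vector (b_z, b_w). -/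
open Matrix

/-- A constrained zonotope with generator matrix `G`, center `c`,
constraint matrix `A` and constraint vector `b`.  Here `N → ℝ` carries the
supremum norm (the default norm on Pi types). -/
def CZ {N NG NC : Type*} [Fintype N] [Fintype NG] [Fintype NC]
    (G : Matrix N NG ℝ) (c : N → ℝ) (A : Matrix NC NG ℝ) (b : NC → ℝ) :
    Set (N → ℝ) :=
  {x | ∃ ξ : NG → ℝ, ‖ξ‖ ≤ 1 ∧ A.mulVec ξ = b ∧ x = c + G.mulVec ξ}

/-- the Cartesian product of the constrained zonotopes
`Z = {Gz, cz, Az, bz} ⊆ ℝ^n` and `W = {Gw, cw, Aw, bw} ⊆ ℝ^m`, viewed as a subset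
of ℝ^{n+m} (vectors indexed by `Fin n ⊕ Fin m`), is exactly the constrained zonotope
`{blkdiag(Gz, Gw), (cz, cw), blkdiag(Az, Aw), (bz, bw)}`. -/
theorem cartesian_product_of_CZ {n m ngz ncz ngw ncw : ℕ}
    (Gz : Matrix (Fin n) (Fin ngz) ℝ) (cz : Fin n → ℝ)
    (Az : Matrix (Fin ncz) (Fin ngz) ℝ) (bz : Fin ncz → ℝ)
    (Gw : Matrix (Fin m) (Fin ngw) ℝ) (cw : Fin m → ℝ)
    (Aw : Matrix (Fin ncw) (Fin ngw) ℝ) (bw : Fin ncw → ℝ) :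
    {v : Fin n ⊕ Fin m → ℝ |
        (fun i => v (Sum.inl i)) ∈ CZ Gz cz Az bz ∧
        (fun j => v (Sum.inr j)) ∈ CZ Gw cw Aw bw} =
      CZ (Matrix.fromBlocks Gz 0 0 Gw) (Sum.elim cz cw)
        (Matrix.fromBlocks Az 0 0 Aw) (Sum.elim bz bw) := by
  ext v
  simp only [CZ, Set.mem_setOf_eq]
  constructor
  · rintro ⟨⟨ξ, h1, h2, h3⟩, ⟨η, k1, k2, k3⟩⟩
    refine ⟨Sum.elim ξ η, ?_, ?_, ?_⟩
    · rw [pi_norm_le_iff_of_nonneg zero_le_one] at h1 k1 ⊢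
      rintro (i | i)
      · exact h1 i
      · exact k1 i
    · rw [Matrix.fromBlocks_mulVec]
      simp [h2, k2]
    · rw [Matrix.fromBlocks_mulVec]
      ext (i | i)
      · simpa using congrFun h3 i
      · simpa using congrFun k3 i
  · rintro ⟨ξ, h1, h2, h3⟩
    rw [pi_norm_le_iff_of_nonneg zero_le_one] at h1
    rw [Matrix.fromBlocks_mulVec] at h2 h3
    refine ⟨⟨ξ ∘ Sum.inl, ?_, ?_, ?_⟩, ⟨ξ ∘ Sum.inr, ?_, ?_, ?_⟩⟩
    · rw [pi_norm_le_iff_of_nonneg zero_le_one]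
      exact fun i => h1 _
    · ext i
      simpa using congrFun h2 (Sum.inl i)
    · ext i
      simpa using congrFun h3 (Sum.inl i)
    · rw [pi_norm_le_iff_of_nonneg zero_le_one]
      exact fun i => h1 _
    · ext i
      simpa using congrFun h2 (Sum.inr i)
    · ext i
      simpa using congrFun h3 (Sum.inr i)
end

section
/- Let J be an interval matrix in 𝕀ℝ^{n×m} given by bounds J^L ≤ J^U, let Ḡ ∈ ℝ^{m×n̄_g} and c̄ ∈ ℝ^m define the zonotope X̄ = {c̄ + Ḡ ξ : ‖ξ‖_∞ ≤ 1}, and let m ∈ 𝕀ℝ^n be an interval vector with mid(m) = 0 such that (Ĵ − mid(J)) c̄ ∈ m for every Ĵ ∈ J. Define the diagonal matrix P ∈ ℝ^{n×n} by P_{ii} = rad(m_i) + Σ_{j=1}^{n̄_g} Σ_{k=1}^{m} rad(J_{ik}) |Ḡ_{kj}|. Then for every matrix Ĵ ∈ J and every x ∈ X̄, the vector (Ĵ − mid(J)) x satisfies |((Ĵ − mid(J)) x)_i| ≤ P_{ii} for all i; equivalently, (Ĵ − mid(J)) x ∈ P·B_∞^n, where B_∞^n is the unit ball of the supremum norm in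 ℝ^n. -/
open Matrix

/-- A zonotope with generator matrix `G` and center `c`.  Here `N → ℝ` carries the
supremum norm (the default norm on Pi types). -/
def Zono {N NG : Type*} [Fintype N] [Fintype NG]
    (G : Matrix N NG ℝ) (c : N → ℝ) : Set (N → ℝ) :=
  {x | ∃ ξ : NG → ℝ, ‖ξ‖ ≤ 1 ∧ x = c + G.mulVec ξ}

/-- let `J` be the interval matrix with bounds `JL ≤ JU`
(so `mid J = (JL + JU)/2` and `rad J = (JU - JL)/2`), let
`X̄ = {c̄ + Ḡ ξ : ‖ξ‖_∞ ≤ 1}`, and let `m` be the interval vector with bounds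
`mL ≤ mU`, midpoint zero, such that `(Ĵ - mid J) c̄ ∈ m` for every `Ĵ ∈ J`.
Then for every `Ĵ ∈ J` and every `x ∈ X̄` and every component `i`,
`|((Ĵ - mid J) x)_i| ≤ P_ii = rad(m_i) + Σ_j Σ_k rad(J_ik) |Ḡ_kj|`. -/
theorem interval_matrix_error_bound {n m nbg : ℕ}
    (JL JU : Matrix (Fin n) (Fin m) ℝ) (hJle : ∀ i k, JL i k ≤ JU i k)
    (Gbar : Matrix (Fin m) (Fin nbg) ℝ) (cbar : Fin m → ℝ)
    (mL mU : Fin n → ℝ) (hmle : ∀ i, mL i ≤ mU i)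
    (hmid : ∀ i, (mL i + mU i) / 2 = 0)
    (hm : ∀ Jhat : Matrix (Fin n) (Fin m) ℝ,
      (∀ i k, JL i k ≤ Jhat i k ∧ Jhat i k ≤ JU i k) →
      ∀ i, mL i ≤ (Jhat - (1 / 2 : ℝ) • (JL + JU)).mulVec cbar i ∧
        (Jhat - (1 / 2 : ℝ) • (JL + JU)).mulVec cbar i ≤ mU i)
    (Jhat : Matrix (Fin n) (Fin m) ℝ)
    (hJhat : ∀ i k, JL i k ≤ Jhat i k ∧ Jhat i k ≤ JU i k)
    (x : Fin m → ℝ) (hx : x ∈ Zono Gbar cbar) :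
    ∀ i, |(Jhat - (1 / 2 : ℝ) • (JL + JU)).mulVec x i| ≤
      (mU i - mL i) / 2 + ∑ j, ∑ k, ((JU i k - JL i k) / 2) * |Gbar k j| := by
  obtain ⟨ξ, hξ, rfl⟩ := hx
  intro i
  have hc := hm Jhat hJhat i
  have hmi := hmid i
  have hD : ∀ k, |(Jhat - (1 / 2 : ℝ) • (JL + JU)) i k| ≤ (JU i k - JL i k) / 2 := by
    intro k
    obtain ⟨h1, h2⟩ := hJhat i k
    simp only [Matrix.sub_apply, Matrix.smul_apply, Matrix.add_apply, smul_eq_mul]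
    rw [abs_le]
    constructor <;> linarith
  generalize (Jhat - (1 / 2 : ℝ) • (JL + JU)) = D at hc hD ⊢
  rw [Matrix.mulVec_add, Pi.add_apply]
  refine (abs_add_le _ _).trans (add_le_add ?_ ?_)
  · rw [abs_le]
    constructor <;> linarith [hc.1, hc.2]
  · rw [Finset.sum_comm]
    simp only [Matrix.mulVec, dotProduct]
    refine (Finset.abs_sum_le_sum_abs _ _).trans (Finset.sum_le_sum fun k _ => ?_)
    rw [abs_mul, ← Finset.mul_sum]
    refine mul_le_mul (hD k) ?_ (abs_nonneg _) ((abs_nonneg _).trans (hD k))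
    refine (Finset.abs_sum_le_sum_abs _ _).trans (Finset.sum_le_sum fun j _ => ?_)
    rw [abs_mul]
    have hj : |ξ j| ≤ 1 := (norm_le_pi_norm ξ j).trans hξ
    exact mul_le_of_le_one_right (abs_nonneg _) hj
end

section
/- (CZ-inclusion) Let X ⊂ ℝ^m be a constrained zonotope with data (G, c, A, b), let J be an interval matrix in 𝕀ℝ^{n×m} with bounds J^L ≤ J^U, and consider the set S = J X = {Ĵ x : Ĵ ∈ J, x ∈ X} ⊂ ℝ^n. Let Ḡ ∈ ℝ^{n̄_g×?}, c̄ ∈ ℝ^m be such that X is contained in the zonotope {c̄ + Ḡ ξ : ‖ξ‖_∞ ≤ 1} with Ḡ ∈ ℝ^{m×n̄_g}, and let m ∈ 𝕀ℝ^n be an interval vector with mid(m) = 0 such that (Ĵ − mid(J)) c̄ ∈ m for every Ĵ ∈ J. Let P ∈ ℝ^{n×n} be the diagonal matrix with P_{ii} = rad(m_i) + Σ_{j=1}^{n̄_g} Σ_{k=1}^{m} rad(J_{ik}) |Ḡ_{kj}|. Then S ⊆ mid(J)·X ⊕ P·B_∞^n, where ⊕ denotes the Minkowski sum and B_∞^n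 is the closed unit ball of the supremum norm in ℝ^n. -/
open Matrix Pointwise

/-- CZ-inclusion: let `X = {G, c, A, b}` be a constrained zonotope
contained in the zonotope `{Ḡ, c̄}`, let `J` be the interval matrix with bounds
`JL ≤ JU`, and let `m` be an interval vector with midpoint zero such that
`(Ĵ - mid J) c̄ ∈ m` for every `Ĵ ∈ J`.  With
`P = diag(rad(m_i) + Σ_j Σ_k rad(J_ik) |Ḡ_kj|)`, the set
`S = J X = {Ĵ x : Ĵ ∈ J, x ∈ X}` satisfies `S ⊆ mid(J)·X ⊕ P·B_∞^n`. -/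
theorem cz_inclusion {n m ng nc nbg : ℕ}
    (G : Matrix (Fin m) (Fin ng) ℝ) (c : Fin m → ℝ)
    (A : Matrix (Fin nc) (Fin ng) ℝ) (b : Fin nc → ℝ)
    (JL JU : Matrix (Fin n) (Fin m) ℝ) (hJle : ∀ i k, JL i k ≤ JU i k)
    (Gbar : Matrix (Fin m) (Fin nbg) ℝ) (cbar : Fin m → ℝ)
    (hXsub : CZ G c A b ⊆ Zono Gbar cbar)
    (mL mU : Fin n → ℝ) (hmle : ∀ i, mL i ≤ mU i)
    (hmid : ∀ i, (mL i + mU i) / 2 = 0)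
    (hm : ∀ Jhat : Matrix (Fin n) (Fin m) ℝ,
      (∀ i k, JL i k ≤ Jhat i k ∧ Jhat i k ≤ JU i k) →
      ∀ i, mL i ≤ (Jhat - (1 / 2 : ℝ) • (JL + JU)).mulVec cbar i ∧
        (Jhat - (1 / 2 : ℝ) • (JL + JU)).mulVec cbar i ≤ mU i) :
    {s : Fin n → ℝ | ∃ Jhat : Matrix (Fin n) (Fin m) ℝ,
        (∀ i k, JL i k ≤ Jhat i k ∧ Jhat i k ≤ JU i k) ∧
        ∃ x ∈ CZ G c A b, s = Jhat.mulVec x} ⊆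
      ((1 / 2 : ℝ) • (JL + JU)).mulVec '' CZ G c A b +
        (Matrix.diagonal fun i =>
            (mU i - mL i) / 2 + ∑ j, ∑ k, ((JU i k - JL i k) / 2) * |Gbar k j|).mulVec ''
          Metric.closedBall (0 : Fin n → ℝ) 1 := by
  rintro s ⟨J, hJ, x, hx, rfl⟩
  obtain ⟨ξ, hξ, hxe⟩ := hXsub hx
  set M := (1 / 2 : ℝ) • (JL + JU) with hM
  set p : Fin n → ℝ := fun i =>
    (mU i - mL i) / 2 + ∑ j, ∑ k, ((JU i k - JL i k) / 2) * |Gbar k j| with hp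
  have hD : ∀ i k, |(J - M) i k| ≤ (JU i k - JL i k) / 2 := by
    intro i k
    have h := hJ i k
    simp only [hM, Matrix.sub_apply, Matrix.smul_apply, Matrix.add_apply, smul_eq_mul]
    rw [abs_le]
    constructor <;> linarith [h.1, h.2]
  have hξj : ∀ j, |ξ j| ≤ 1 := fun j => by
    have := (norm_le_pi_norm ξ j).trans hξ
    simpa [Real.norm_eq_abs] using this
  have hc : ∀ i, |(J - M).mulVec cbar i| ≤ (mU i - mL i) / 2 := by
    intro i
    have h := hm J hJ i
    have h2 := hmid i
    rw [abs_le]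
    constructor <;> linarith [h.1, h.2]
  have hG : ∀ i, |(J - M).mulVec (Gbar.mulVec ξ) i| ≤
      ∑ j, ∑ k, ((JU i k - JL i k) / 2) * |Gbar k j| := by
    intro i
    have e : (J - M).mulVec (Gbar.mulVec ξ) i
        = ∑ j, ∑ k, (J - M) i k * (Gbar k j * ξ j) := by
      rw [Finset.sum_comm]
      simp only [Matrix.mulVec, dotProduct, Finset.mul_sum]
    rw [e]
    refine (Finset.abs_sum_le_sum_abs _ _).trans (Finset.sum_le_sum fun j _ => ?_)
    refine (Finset.abs_sum_le_sum_abs _ _).trans (Finset.sum_le_sum fun k _ => ?_)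
    rw [abs_mul, abs_mul]
    refine mul_le_mul (hD i k) ?_ (by positivity) ((abs_nonneg _).trans (hD i k))
    exact mul_le_of_le_one_right (abs_nonneg _) (hξj j)
  have hy : ∀ i, |(J - M).mulVec x i| ≤ p i := by
    intro i
    rw [hxe, Matrix.mulVec_add, Pi.add_apply]
    exact (abs_add_le _ _).trans (add_le_add (hc i) (hG i))
  refine Set.mem_add.2 ⟨M.mulVec x, ⟨x, hx, rfl⟩, (J - M).mulVec x,
    ⟨fun i => (J - M).mulVec x i / p i, ?_, ?_⟩, ?_⟩
  · rw [mem_closedBall_zero_iff, pi_norm_le_iff_of_nonneg zero_le_one]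
    intro i
    rw [Real.norm_eq_abs, abs_div]
    have h0 : 0 ≤ p i := (abs_nonneg _).trans (hy i)
    rw [abs_of_nonneg h0]
    exact div_le_one_of_le₀ (hy i) h0
  · ext i
    rw [Matrix.mulVec_diagonal]
    by_cases h0 : p i = 0
    · have h1 := hy i
      rw [h0] at h1
      have h2 := abs_nonpos_iff.1 h1
      rw [h2]
      simp
    · exact mul_div_cancel₀ _ h0
  · rw [Matrix.sub_mulVec]
    abel
end

section
/- (State prediction) Let f : ℝ^n × ℝ^{n_u} × ℝ^{n_p} × ℝ^{n_w} → ℝ^n be continuously differentiable, let u ∈ ℝ^{n_u}, let X ⊂ ℝ^n, P ⊂ ℝ^{n_p}, W ⊂ ℝ^{n_w} be constrained zonotopes, let B_x ⊆ ℝ^n and B_p ⊆ ℝ^{n_p} be convex sets with X ⊆ B_x and P ⊆ B_p, and choose γ_x ∈ B_x, γ_p ∈ B_p; set Z = X × P ⊂ ℝ^{n+n_p} and γ_z = (γ_x, γ_p). Let Z_w ⊆ ℝ^n be a set with {f(γ_x, u, γ_p, w) : w ∈ W} ⊆ Z_w, and let J be an interval matrix in 𝕀ℝ^{n×(n+n_p)}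 with bounds J^L ≤ J^U such that for all x ∈ B_x, p ∈ B_p, w ∈ W, the Jacobian of the map (x,p) ↦ f(x,u,p,w) at (x,p) lies componentwise between J^L and J^U. Let Ḡ ∈ ℝ^{(n+n_p)×n̄_g} and c̄ ∈ ℝ^{n+n_p} be such that Z − γ_z ⊆ {c̄ + Ḡ ξ : ‖ξ‖_∞ ≤ 1}, let m ∈ 𝕀ℝ^n be an interval vector with mid(m) = 0 and (Ĵ − mid(J)) c̄ ∈ m for every Ĵ ∈ J, and let P̂ ∈ ℝ^{n×n} be the diagonal matrix with P̂_{ii} = rad(m_i) + Σ_{j=1}^{n̄_g} Σ_{k=1}^{n+n_p} rad(J_{ik}) |Ḡ_{kj}|. Then {f(x, u, p, w) : x ∈ X, p ∈ P, w ∈ W} ⊆ Z_w ⊕ mid(J)·(Z − γ_z) ⊕ P̂·B_∞^n. -/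
open Matrix Pointwise

/-- A set is a constrained zonotope if it admits a CG-representation. -/
def IsCZ {N : Type*} [Fintype N] (S : Set (N → ℝ)) : Prop :=
  ∃ (ng nc : ℕ) (G : Matrix N (Fin ng) ℝ) (c : N → ℝ)
    (A : Matrix (Fin nc) (Fin ng) ℝ) (b : Fin nc → ℝ), S = CZ G c A b

/-- state prediction: with `Z = X × P ⊆ ℝ^{n+n_p}` (vectors indexed by
`Fin n ⊕ Fin n_p`), `γ_z = (γ_x, γ_p)`, an interval matrix `JL ≤ JU` enclosing the
Jacobians of `(x, p) ↦ f(x, u, p, w)` over `B_x × B_p × W`, a set `Z_w` enclosing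
`f(γ_x, u, γ_p, W)`, a zonotope `{Ḡ, c̄} ⊇ Z - γ_z`, an interval vector `m` with
midpoint zero enclosing `(Ĵ - mid J) c̄` for all `Ĵ ∈ J`, and the diagonal matrix
`P̂` with `P̂_ii = rad(m_i) + Σ_j Σ_ℓ rad(J_iℓ) |Ḡ_ℓj|`, the exact image
`f(X, u, P, W)` is contained in `Z_w ⊕ mid(J)·(Z - γ_z) ⊕ P̂·B_∞^n`. -/
theorem state_prediction {n nu np nw nbg : ℕ}
    (f : (Fin n → ℝ) → (Fin nu → ℝ) → (Fin np → ℝ) → (Fin nw → ℝ) → (Fin n → ℝ))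
    (hf : ContDiff ℝ 1
      (fun q : (Fin n → ℝ) × (Fin nu → ℝ) × (Fin np → ℝ) × (Fin nw → ℝ) =>
        f q.1 q.2.1 q.2.2.1 q.2.2.2))
    (u : Fin nu → ℝ)
    (X : Set (Fin n → ℝ)) (hX : IsCZ X)
    (P : Set (Fin np → ℝ)) (hP : IsCZ P)
    (W : Set (Fin nw → ℝ)) (hW : IsCZ W)
    (Bx : Set (Fin n → ℝ)) (hBx : Convex ℝ Bx) (hXBx : X ⊆ Bx)
    (Bp : Set (Fin np → ℝ)) (hBp : Convex ℝ Bp) (hPBp : P ⊆ Bp)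
    (γx : Fin n → ℝ) (hγx : γx ∈ Bx) (γp : Fin np → ℝ) (hγp : γp ∈ Bp)
    (Zw : Set (Fin n → ℝ)) (hZw : (fun w => f γx u γp w) '' W ⊆ Zw)
    (JL JU : Matrix (Fin n) (Fin n ⊕ Fin np) ℝ) (hJle : ∀ i ℓ, JL i ℓ ≤ JU i ℓ)
    (hJ : ∀ x ∈ Bx, ∀ p ∈ Bp, ∀ w ∈ W, ∀ i ℓ,
      JL i ℓ ≤ fderiv ℝ
          (fun z : (Fin n ⊕ Fin np) → ℝ =>
            f (fun i' => z (Sum.inl i')) u (fun j' => z (Sum.inr j')) w)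
          (Sum.elim x p) (Pi.single ℓ 1) i ∧
      fderiv ℝ
          (fun z : (Fin n ⊕ Fin np) → ℝ =>
            f (fun i' => z (Sum.inl i')) u (fun j' => z (Sum.inr j')) w)
          (Sum.elim x p) (Pi.single ℓ 1) i ≤ JU i ℓ)
    (Gbar : Matrix (Fin n ⊕ Fin np) (Fin nbg) ℝ) (cbar : (Fin n ⊕ Fin np) → ℝ)
    (hGbar : (fun z => z - Sum.elim γx γp) ''
        {z : (Fin n ⊕ Fin np) → ℝ |
          (fun i => z (Sum.inl i)) ∈ X ∧ (fun j => z (Sum.inr j)) ∈ P} ⊆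
      Zono Gbar cbar)
    (mL mU : Fin n → ℝ) (hmle : ∀ i, mL i ≤ mU i)
    (hmid : ∀ i, (mL i + mU i) / 2 = 0)
    (hm : ∀ Jhat : Matrix (Fin n) (Fin n ⊕ Fin np) ℝ,
      (∀ i ℓ, JL i ℓ ≤ Jhat i ℓ ∧ Jhat i ℓ ≤ JU i ℓ) →
      ∀ i, mL i ≤ (Jhat - (1 / 2 : ℝ) • (JL + JU)).mulVec cbar i ∧
        (Jhat - (1 / 2 : ℝ) • (JL + JU)).mulVec cbar i ≤ mU i) :
    {v : Fin n → ℝ | ∃ x ∈ X, ∃ p ∈ P, ∃ w ∈ W, v = f x u p w} ⊆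
      Zw +
        ((1 / 2 : ℝ) • (JL + JU)).mulVec ''
          ((fun z => z - Sum.elim γx γp) ''
            {z : (Fin n ⊕ Fin np) → ℝ |
              (fun i => z (Sum.inl i)) ∈ X ∧ (fun j => z (Sum.inr j)) ∈ P}) +
        (Matrix.diagonal fun i =>
            (mU i - mL i) / 2 +
              ∑ j, ∑ ℓ, ((JU i ℓ - JL i ℓ) / 2) * |Gbar ℓ j|).mulVec ''
          Metric.closedBall (0 : Fin n → ℝ) 1 := by
  rintro v ⟨x, hx, p, hp, w, hw, rfl⟩
  set g : ((Fin n ⊕ Fin np) → ℝ) → (Fin n → ℝ) := fun z =>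
    f (fun i' => z (Sum.inl i')) u (fun j' => z (Sum.inr j')) w with hg
  have hgd : Differentiable ℝ g := by
    have h2 : Differentiable ℝ (fun z : (Fin n ⊕ Fin np) → ℝ =>
        ((fun i' => z (Sum.inl i'), u, fun j' => z (Sum.inr j'), w) :
          (Fin n → ℝ) × (Fin nu → ℝ) × (Fin np → ℝ) × (Fin nw → ℝ))) := by
      fun_prop
    exact (hf.differentiable (by norm_num)).comp h2
  set B : Set ((Fin n ⊕ Fin np) → ℝ) :=
    {z | (fun i => z (Sum.inl i)) ∈ Bx ∧ (fun j => z (Sum.inr j)) ∈ Bp} with hB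
  have hBc : Convex ℝ B := by
    intro a ha b hb s t hs ht hst
    exact ⟨hBx ha.1 hb.1 hs ht hst, hBp ha.2 hb.2 hs ht hst⟩
  have hγB : Sum.elim γx γp ∈ B := ⟨hγx, hγp⟩
  have hzB : Sum.elim x p ∈ B := ⟨hXBx hx, hPBp hp⟩
  have hmvt : ∀ i, ∃ z ∈ B, g (Sum.elim x p) i - g (Sum.elim γx γp) i =
      fderiv ℝ g z (Sum.elim x p - Sum.elim γx γp) i := by
    intro i
    obtain ⟨z, hz, h⟩ := domain_mvt (f := fun z => g z i)
      (f' := fun z => (ContinuousLinearMap.proj i).comp (fderiv ℝ g z))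
      (s := B) (x := Sum.elim γx γp) (y := Sum.elim x p)
      (fun z _ => ((hasFDerivAt_pi'.1 (hgd z).hasFDerivAt) i).hasFDerivWithinAt) hBc hγB hzB
    exact ⟨z, hBc.segment_subset hγB hzB hz, h⟩
  choose ζ hζB hζ using hmvt
  set Jh : Matrix (Fin n) (Fin n ⊕ Fin np) ℝ :=
    fun i ℓ => fderiv ℝ g (ζ i) (Pi.single ℓ 1) i with hJh
  have hJb : ∀ i ℓ, JL i ℓ ≤ Jh i ℓ ∧ Jh i ℓ ≤ JU i ℓ := by
    intro i ℓ
    have h := hJ _ (hζB i).1 _ (hζB i).2 w hw i ℓ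
    have e : Sum.elim (fun k => ζ i (Sum.inl k)) (fun k => ζ i (Sum.inr k)) = ζ i := by
      ext k; cases k <;> rfl
    rw [e] at h
    exact h
  have hlin : ∀ i (d : (Fin n ⊕ Fin np) → ℝ), fderiv ℝ g (ζ i) d i = Jh.mulVec d i := by
    intro i d
    conv_lhs => rw [pi_eq_sum_univ' d]
    rw [map_sum, Finset.sum_apply]
    refine Finset.sum_congr rfl fun ℓ _ => ?_
    have e : (fun j => if j = ℓ then (1 : ℝ) else 0) = Pi.single ℓ 1 := by
      ext j; simp [Pi.single_apply]
    simp [hJh, mul_comm, e]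
  set M := (1 / 2 : ℝ) • (JL + JU) with hM
  set d := Sum.elim x p - Sum.elim γx γp with hd
  have hdm : d ∈ (fun z => z - Sum.elim γx γp) ''
        {z : (Fin n ⊕ Fin np) → ℝ |
          (fun i => z (Sum.inl i)) ∈ X ∧ (fun j => z (Sum.inr j)) ∈ P} :=
    ⟨Sum.elim x p, ⟨hx, hp⟩, rfl⟩
  obtain ⟨ξ, hξ, hdξ⟩ := hGbar hdm
  set δ := (Jh - M).mulVec d with hδ
  have hrad : ∀ i ℓ, |(Jh - M) i ℓ| ≤ (JU i ℓ - JL i ℓ) / 2 := by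
    intro i ℓ
    have := hJb i ℓ
    simp only [hM, Matrix.sub_apply, Matrix.smul_apply, Matrix.add_apply, smul_eq_mul]
    rw [abs_le]; constructor <;> linarith
  have hδb : ∀ i, |δ i| ≤ (mU i - mL i) / 2 +
      ∑ j, ∑ ℓ, ((JU i ℓ - JL i ℓ) / 2) * |Gbar ℓ j| := by
    intro i
    have h1 : |(Jh - M).mulVec cbar i| ≤ (mU i - mL i) / 2 := by
      have := hm Jh hJb i
      have := hmid i
      rw [abs_le]; constructor <;> linarith
    have h2 : |((Jh - M).mulVec (Gbar.mulVec ξ)) i| ≤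
        ∑ j, ∑ ℓ, ((JU i ℓ - JL i ℓ) / 2) * |Gbar ℓ j| := by
      rw [Matrix.mulVec_mulVec]
      simp only [Matrix.mulVec, dotProduct]
      refine (Finset.abs_sum_le_sum_abs _ _).trans (Finset.sum_le_sum fun j _ => ?_)
      rw [abs_mul]
      have h3 : |ξ j| ≤ 1 := (norm_le_pi_norm ξ j).trans hξ
      refine (mul_le_of_le_one_right (abs_nonneg _) h3).trans ?_
      rw [Matrix.mul_apply]
      refine (Finset.abs_sum_le_sum_abs _ _).trans (Finset.sum_le_sum fun ℓ _ => ?_)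
      rw [abs_mul]
      exact mul_le_mul_of_nonneg_right (hrad i ℓ) (abs_nonneg _)
    have h4 : δ i = (Jh - M).mulVec cbar i + (Jh - M).mulVec (Gbar.mulVec ξ) i := by
      rw [hδ, hdξ, Matrix.mulVec_add]; rfl
    rw [h4]
    exact (abs_add_le _ _).trans (add_le_add h1 h2)
  refine Set.mem_add.2 ⟨f γx u γp w + M.mulVec d, Set.add_mem_add (hZw ⟨w, hw, rfl⟩) ⟨d, hdm, rfl⟩,
    δ, ?_, ?_⟩
  · set q : Fin n → ℝ := fun i => (mU i - mL i) / 2 +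
      ∑ j, ∑ ℓ, ((JU i ℓ - JL i ℓ) / 2) * |Gbar ℓ j| with hq
    refine ⟨fun i => δ i / q i, ?_, ?_⟩
    · rw [mem_closedBall_zero_iff, pi_norm_le_iff_of_nonneg zero_le_one]
      intro i
      rw [Real.norm_eq_abs, abs_div]
      exact div_le_one_of_le₀ ((hδb i).trans (le_abs_self _)) (abs_nonneg _)
    · ext i
      rw [Matrix.mulVec_diagonal]
      by_cases h0 : q i = 0
      · have h5 : |δ i| ≤ q i := hδb i
        rw [h0] at h5
        rw [h0, abs_nonpos_iff.1 h5]; simp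
      · field_simp
  · ext i
    have h6 := hζ i
    rw [hlin] at h6
    have h7 : g (Sum.elim x p) i = f x u p w i := rfl
    have h8 : g (Sum.elim γx γp) i = f γx u γp w i := rfl
    rw [h7, h8] at h6
    simp only [Pi.add_apply, hδ, Matrix.sub_mulVec, Pi.sub_apply]
    linarith
end
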